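/- (Lemma 2, equation (25)) u_1^† R u_3 = Σ_{k=1}^{K} σ_k² · c_tx,k · a_rx,k. -/

import Mathlib

open scoped BigOperators

/-- Steering vector `a(ε) ∈ ℂ^{n+1}` with entries `exp(j·i·ε)`, `i = 0,…,n`. -/
noncomputable def steer (n : ℕ) (ε : ℝ) : Fin (n + 1) → ℂ :=
  fun i => Complex.exp (Complex.I * ((i : ℕ) : ℂ) * (ε : ℂ))

/-- The vector `E(η_1,…,η_m) ∈ ℂ^{m+1}` defined recursively by
`E(η_1) = (1, −exp(j·η_1))` and
`E(η_1,…,η_p) = (E(η_1,…,η_{p−1}), 0) − exp(j·η_p)·(0, E(η_1,…,η_{p−1}))`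
(with base case `E() = (1)`, which reproduces the stated base case at `m = 1`). -/
noncomputable def Evec : (m : ℕ) → (Fin m → ℝ) → (Fin (m + 1) → ℂ)
  | 0, _ => fun _ => 1
  | m + 1, η => fun i =>
      Fin.snoc (α := fun _ => ℂ) (Evec m fun j => η j.castSucc) 0 i -
        Complex.exp (Complex.I * (η (Fin.last m) : ℂ)) *
          Fin.cons (α := fun _ => ℂ) 0 (Evec m fun j => η j.castSucc) i

/-- The cyclic down-shift matrix on `ℂ^{n+1}`: `(Lv)_0 = v_n`, `(Lv)_i = v_{i−1}` for `i ≥ 1`. -/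
def Lmat (n : ℕ) : Matrix (Fin (n + 1)) (Fin (n + 1)) ℂ :=
  Matrix.of fun i l => if l = i - 1 then 1 else 0

/-- Kronecker product of vectors: `(v ⊗ w)_{(i,l)} = v_i · w_l`. -/
def kron {a b : Type*} (v : a → ℂ) (w : b → ℂ) : a × b → ℂ :=
  fun p => v p.1 * w p.2

/-- `x^† y = Σ_i conj(x_i) · y_i`. -/
noncomputable def ip {n : Type*} [Fintype n] (x y : n → ℂ) : ℂ :=
  ∑ i, (starRingEnd ℂ) (x i) * y i

/-- `x^† M y = Σ_{i,l} conj(x_i) · M_{i,l} · y_l`. -/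
noncomputable def qf {n : Type*} [Fintype n] (x : n → ℂ) (M : Matrix n n ℂ) (y : n → ℂ) : ℂ :=
  ∑ i, ∑ l, (starRingEnd ℂ) (x i) * M i l * y l

/-- `E(η_1,…,η_Kp) ∈ ℂ^{Kp+1}` padded with a trailing zero, giving a vector in `ℂ^{Kp+2}`. -/
noncomputable def Epad (Kp : ℕ) (η : Fin Kp → ℝ) : Fin (Kp + 2) → ℂ :=
  Fin.snoc (Evec Kp η) 0

/-- `u_0 = Ẽ_tx ⊗ Ẽ_rx`. -/
noncomputable def u0 (Kp : ℕ) (ηt ηr : Fin Kp → ℝ) : Fin (Kp + 2) × Fin (Kp + 2) → ℂ :=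
  kron (Epad Kp ηt) (Epad Kp ηr)

/-- `u_1 = Ẽ_tx ⊗ (L·Ẽ_rx)`. -/
noncomputable def u1 (Kp : ℕ) (ηt ηr : Fin Kp → ℝ) : Fin (Kp + 2) × Fin (Kp + 2) → ℂ :=
  kron (Epad Kp ηt) ((Lmat (Kp + 1)).mulVec (Epad Kp ηr))

/-- `u_2 = (L·Ẽ_tx) ⊗ Ẽ_rx`. -/
noncomputable def u2 (Kp : ℕ) (ηt ηr : Fin Kp → ℝ) : Fin (Kp + 2) × Fin (Kp + 2) → ℂ :=
  kron ((Lmat (Kp + 1)).mulVec (Epad Kp ηt)) (Epad Kp ηr)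

/-- `u_3 = (L·Ẽ_tx) ⊗ (L·Ẽ_rx)`. -/
noncomputable def u3 (Kp : ℕ) (ηt ηr : Fin Kp → ℝ) : Fin (Kp + 2) × Fin (Kp + 2) → ℂ :=
  kron ((Lmat (Kp + 1)).mulVec (Epad Kp ηt)) ((Lmat (Kp + 1)).mulVec (Epad Kp ηr))

/-- The noiseless auto-correlation matrix `R = Σ_{k=1}^K σ_k² A_k A_k^†`, where
`A_k = a(ε_tx,k) ⊗ a(ε_rx,k)` and `σsq k` is the power `σ_k²`. -/
noncomputable def Rmat (K : ℕ) (εtx εrx σsq : Fin K → ℝ) :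
    Matrix (Fin (K + 1) × Fin (K + 1)) (Fin (K + 1) × Fin (K + 1)) ℂ :=
  Matrix.of fun p q => ∑ k, (σsq k : ℂ) *
    kron (steer K (εtx k)) (steer K (εrx k)) p *
    (starRingEnd ℂ) (kron (steer K (εtx k)) (steer K (εrx k)) q)

/-- The rank-one matrix `R_ε = a(ε) a(ε)^† ∈ ℂ^{(Kp+2)×(Kp+2)}`. -/
noncomputable def Rsingle (Kp : ℕ) (ε : ℝ) : Matrix (Fin (Kp + 2)) (Fin (Kp + 2)) ℂ :=
  Matrix.of fun i l => steer (Kp + 1) ε i * (starRingEnd ℂ) (steer (Kp + 1) ε l)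

/-- The iDEA cost `Q_tx(φ) = (u_1 − exp(j·φ)·u_3)^† R (u_1 − exp(j·φ)·u_3)`. -/
noncomputable def Qcost (Kp : ℕ) (εtx εrx σsq : Fin (Kp + 1) → ℝ)
    (ηt ηr : Fin Kp → ℝ) (φ : ℝ) : ℂ :=
  qf (u1 Kp ηt ηr - Complex.exp (Complex.I * (φ : ℂ)) • u3 Kp ηt ηr)
    (Rmat (Kp + 1) εtx εrx σsq)
    (u1 Kp ηt ηr - Complex.exp (Complex.I * (φ : ℂ)) • u3 Kp ηt ηr)

/-- The closed-form value `4^{2K−1} · Σ_k σ_k² sin²((ε_tx,k − φ)/2) ∏_m sin²((ε_tx,k − ε̂_tx,m)/2)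
∏_n sin²((ε_rx,k − ε̂_rx,n)/2)` (here `K = Kp + 1`, so `2K − 1 = 2·Kp + 1`). -/
noncomputable def Ssum (Kp : ℕ) (εtx εrx σsq : Fin (Kp + 1) → ℝ)
    (ηt ηr : Fin Kp → ℝ) (φ : ℝ) : ℝ :=
  (4 : ℝ) ^ (2 * Kp + 1) * ∑ k, σsq k * Real.sin ((εtx k - φ) / 2) ^ 2 *
    (∏ m, Real.sin ((εtx k - ηt m) / 2) ^ 2) *
    (∏ n, Real.sin ((εrx k - ηr n) / 2) ^ 2)

/-- The `k = K` term of `Ssum`, i.e. the lower bound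
`4^{2K−1} · σ_K² sin²((ε_tx,K − φ)/2) ∏_m sin²((ε_tx,K − ε̂_tx,m)/2) ∏_n sin²((ε_rx,K − ε̂_rx,n)/2)`. -/
noncomputable def Slb (Kp : ℕ) (εtx εrx σsq : Fin (Kp + 1) → ℝ)
    (ηt ηr : Fin Kp → ℝ) (φ : ℝ) : ℝ :=
  (4 : ℝ) ^ (2 * Kp + 1) * σsq (Fin.last Kp) *
    Real.sin ((εtx (Fin.last Kp) - φ) / 2) ^ 2 *
    (∏ m, Real.sin ((εtx (Fin.last Kp) - ηt m) / 2) ^ 2) *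
    (∏ n, Real.sin ((εrx (Fin.last Kp) - ηr n) / 2) ^ 2)

/-! Each term of `R` is the Kronecker product of its transmit and receive matrices, so on Kronecker
products of vectors its form splits into a transmit and a receive factor. The transmit factor is
`c_tx,k` since its left argument is unshifted. In the receive factor `L` acts on both arguments,
which is invisible: `a(ε) a(ε)^†` has entries `exp(j(i - l)ε)`, hence is Toeplitz, and the trailing
zero of the padded vector keeps the cyclic shift from wrapping around. So `d_rx,k = a_rx,k`. -/

open scoped Kronecker Matrix

section SesquilinearForm

variable {m n : Type*} [Fintype m] [Fintype n]

theorem qf_eq_star_dotProduct_mulVec (x : m → ℂ) (M : Matrix m m ℂ) (y : m → ℂ) :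
    qf x M y = star x ⬝ᵥ M *ᵥ y := by
  simp only [qf, dotProduct, Matrix.mulVec, Finset.mul_sum, mul_assoc, Pi.star_apply,
    starRingEnd_apply]

theorem qf_mul (x : m → ℂ) (M N : Matrix m m ℂ) (y : m → ℂ) :
    qf x (M * N) y = qf x M (N *ᵥ y) := by
  rw [qf_eq_star_dotProduct_mulVec, qf_eq_star_dotProduct_mulVec, Matrix.mulVec_mulVec]

theorem qf_sum_smul {ι : Type*} [Fintype ι] (x : m → ℂ) (c : ι → ℂ) (M : ι → Matrix m m ℂ)
    (y : m → ℂ) : qf x (∑ k, c k • M k) y = ∑ k, c k * qf x (M k) y := by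
  simp only [qf_eq_star_dotProduct_mulVec, Matrix.sum_mulVec, dotProduct_sum, Matrix.smul_mulVec,
    dotProduct_smul, smul_eq_mul]

theorem kronecker_mulVec_kron {l p : Type*} (A : Matrix l m ℂ) (B : Matrix p n ℂ) (y : m → ℂ)
    (z : n → ℂ) :
    (A ⊗ₖ B) *ᵥ kron y z = kron (A *ᵥ y) (B *ᵥ z) := by
  ext ⟨i, j⟩
  simp only [Matrix.mulVec, dotProduct, kron, Matrix.kroneckerMap_apply, Fintype.sum_prod_type,
    Finset.sum_mul_sum, mul_mul_mul_comm]

theorem star_kron_dotProduct_kron (v y : m → ℂ) (w z : n → ℂ) :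
    star (kron v w) ⬝ᵥ kron y z = (star v ⬝ᵥ y) * (star w ⬝ᵥ z) := by
  simp only [dotProduct, kron, Pi.star_apply, star_mul', Fintype.sum_prod_type,
    Finset.sum_mul_sum, mul_mul_mul_comm]

theorem qf_kron_kronecker (v y : m → ℂ) (w z : n → ℂ) (A : Matrix m m ℂ) (B : Matrix n n ℂ) :
    qf (kron v w) (A ⊗ₖ B) (kron y z) = qf v A y * qf w B z := by
  simp only [qf_eq_star_dotProduct_mulVec, kronecker_mulVec_kron, star_kron_dotProduct_kron]

end SesquilinearForm

theorem Lmat_mulVec_apply (n : ℕ) (v : Fin (n + 1) → ℂ) (i : Fin (n + 1)) :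
    (Lmat n *ᵥ v) i = v (i - 1) := by
  simp [Matrix.mulVec, dotProduct, Lmat]

theorem Lmat_mulVec_snoc {n : ℕ} (v : Fin n → ℂ) (c : ℂ) :
    Lmat n *ᵥ (Fin.snoc v c : Fin (n + 1) → ℂ) = Fin.cons c v := by
  ext i
  rw [Lmat_mulVec_apply]
  cases i using Fin.cases with
  | zero =>
    have zero_sub_one : (0 : Fin (n + 1)) - 1 = Fin.last n := by
      rw [sub_eq_iff_eq_add, Fin.last_add_one]
    rw [zero_sub_one, Fin.snoc_last, Fin.cons_zero]
  | succ j =>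
    have succ_sub_one : j.succ - 1 = j.castSucc := by
      rw [sub_eq_iff_eq_add, Fin.coeSucc_eq_succ]
    rw [succ_sub_one, Fin.snoc_castSucc, Fin.cons_succ]

/-- A square matrix is Toeplitz if its entries are constant along diagonals. This is encoded by
comparing each entry with its lower-right neighbour: exactly the condition under which the
sesquilinear form of the matrix does not see a simultaneous shift of both arguments. -/
def IsToeplitz {α : Type*} {n : ℕ} (M : Matrix (Fin (n + 1)) (Fin (n + 1)) α) : Prop :=
  ∀ i j : Fin n, M i.succ j.succ = M i.castSucc j.castSucc

theorem IsToeplitz.qf_cons_zero {n : ℕ} {M : Matrix (Fin (n + 1)) (Fin (n + 1)) ℂ}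
    (hM : IsToeplitz M) (v w : Fin n → ℂ) :
    qf (Fin.cons 0 v) M (Fin.cons 0 w) = qf (Fin.snoc v 0) M (Fin.snoc w 0) := by
  calc qf (Fin.cons 0 v) M (Fin.cons 0 w)
      = ∑ i, ∑ j, (starRingEnd ℂ) (v i) * M i.succ j.succ * w j := by
        simp [qf, Fin.sum_univ_succ]
    _ = ∑ i, ∑ j, (starRingEnd ℂ) (v i) * M i.castSucc j.castSucc * w j := by
        simp only [hM _ _]
    _ = qf (Fin.snoc v 0) M (Fin.snoc w 0) := by
        simp [qf, Fin.sum_univ_castSucc]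

theorem IsToeplitz.qf_Lmat_mulVec_snoc_zero {n : ℕ} {M : Matrix (Fin (n + 1)) (Fin (n + 1)) ℂ}
    (hM : IsToeplitz M) (v w : Fin n → ℂ) :
    qf (Lmat n *ᵥ Fin.snoc v 0) M (Lmat n *ᵥ Fin.snoc w 0) =
      qf (Fin.snoc v 0) M (Fin.snoc w 0) := by
  rw [Lmat_mulVec_snoc, Lmat_mulVec_snoc, hM.qf_cons_zero]

theorem Rsingle_apply (n : ℕ) (ε : ℝ) (i l : Fin (n + 2)) :
    Rsingle n ε i l = Complex.exp (Complex.I * ((i : ℕ) - (l : ℕ) : ℂ) * ε) := by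
  simp only [Rsingle, steer, Matrix.of_apply, ← Complex.exp_conj, ← Complex.exp_add, map_mul,
    Complex.conj_I, Complex.conj_ofReal, map_natCast]
  congr 1
  ring

theorem isToeplitz_Rsingle (n : ℕ) (ε : ℝ) : IsToeplitz (Rsingle n ε) := fun i l => by
  simp only [Rsingle_apply, Fin.val_succ, Fin.val_castSucc, Nat.cast_add, add_sub_add_right_eq_sub]

theorem Rmat_eq_sum_smul_kronecker (n : ℕ) (εtx εrx σsq : Fin (n + 1) → ℝ) :
    Rmat (n + 1) εtx εrx σsq =
      ∑ k, (σsq k : ℂ) • (Rsingle n (εtx k) ⊗ₖ Rsingle n (εrx k)) := by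
  ext p q
  simp only [Rmat, Rsingle, kron, Matrix.of_apply, Matrix.sum_apply, Matrix.smul_apply,
    Matrix.kroneckerMap_apply, smul_eq_mul, map_mul]
  exact Finset.sum_congr rfl fun k _ => by ring

theorem statement13_general {ι m : Type*} [Fintype ι] [Fintype m] {n : ℕ} (c : ι → ℂ)
    (A : ι → Matrix m m ℂ) (B : ι → Matrix (Fin (n + 1)) (Fin (n + 1)) ℂ)
    (hB : ∀ k, IsToeplitz (B k)) (S : Matrix m m ℂ) (x y : m → ℂ) (v w : Fin n → ℂ) :
    qf (kron x (Lmat n *ᵥ Fin.snoc v 0)) (∑ k, c k • (A k ⊗ₖ B k))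
        (kron (S *ᵥ y) (Lmat n *ᵥ Fin.snoc w 0)) =
      ∑ k, c k * qf x (A k * S) y * qf (Fin.snoc v 0) (B k) (Fin.snoc w 0) := by
  rw [qf_sum_smul]
  refine Finset.sum_congr rfl fun k _ => ?_
  rw [qf_kron_kronecker, (hB k).qf_Lmat_mulVec_snoc_zero, qf_mul, mul_assoc]

/-- Lemma 2, eq. (25): u_1^† R u_3 = Σ_k σ_k² · c_tx,k · a_rx,k. -/
theorem statement13 (Kp : ℕ) (hKp : 1 ≤ Kp) (εtx εrx : Fin (Kp + 1) → ℝ)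
    (σsq : Fin (Kp + 1) → ℝ) (hσ : ∀ k, 0 < σsq k) (ηt ηr : Fin Kp → ℝ) :
    qf (u1 Kp ηt ηr) (Rmat (Kp + 1) εtx εrx σsq) (u3 Kp ηt ηr) =
      ∑ k, (σsq k : ℂ) *
        (qf (Epad Kp ηt) (Rsingle Kp (εtx k) * Lmat (Kp + 1)) (Epad Kp ηt)) *
        (qf (Epad Kp ηr) (Rsingle Kp (εrx k)) (Epad Kp ηr)) := by
  rw [Rmat_eq_sum_smul_kronecker]
  exact statement13_general _ _ _ (fun k => isToeplitz_Rsingle Kp (εrx k)) _ _ _ _ _
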